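/- arXiv:2105.13660 — 2 statements merged into one kernel-verified Lean document; each statement's English description precedes it below -/
import Mathlib

section
/- Let A be a DGA over ℚ with H³ = 0. Then the linear map 𝒫 : D → H⁸ induced by the restriction of αγ² to D (which takes closed values) is independent of the cochain choice: for any two cochain choices (α, γ) and (α′, γ′), the classes [α(q)γ(e)γ(f) + …] and [α′(q)γ′(e)γ′(f) + …] in H⁸ agree on every element of D. -/
/-!
Common constructions: for a `ℚ`-vector space `V`, the symmetric powers
`P²V, P³V, P⁴V, P⁵V` (as `SqM V`, `CubM V`, `QuarM V`, `QuinM V`), built as iterated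
quotients of tensor products, with the multiplication maps between them; the exterior
square `Λ²W` (as `AltM W`) with the wedge map; and the 5-linear map `⋆` (as `star5`).
-/

open TensorProduct

noncomputable section

variable (V W : Type) [AddCommGroup V] [Module ℚ V] [AddCommGroup W] [Module ℚ W]

/-- The relations defining the symmetric square `P²V` as a quotient of `V ⊗ V`. -/
def sqRel : Submodule ℚ (V ⊗[ℚ] V) :=
  Submodule.span ℚ {z | ∃ x y : V, z = x ⊗ₜ[ℚ] y - y ⊗ₜ[ℚ] x}

/-- The symmetric square `P²V`. -/
abbrev SqM : Type := (V ⊗[ℚ] V) ⧸ sqRel V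

/-- The product `V × V → P²V`, `(x, y) ↦ xy`. -/
def sqm : V →ₗ[ℚ] V →ₗ[ℚ] SqM V :=
  (TensorProduct.mk ℚ V V).compr₂ (sqRel V).mkQ

/-- The relations presenting the symmetric cube `P³V` as a quotient of `V ⊗ P²V`. -/
def cubRel : Submodule ℚ (V ⊗[ℚ] SqM V) :=
  Submodule.span ℚ {z | ∃ x y w : V, z = x ⊗ₜ[ℚ] sqm V y w - y ⊗ₜ[ℚ] sqm V x w}

/-- The symmetric cube `P³V`. -/
abbrev CubM : Type := (V ⊗[ℚ] SqM V) ⧸ cubRel V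

/-- The product `V × P²V → P³V`. -/
def mulC : V →ₗ[ℚ] SqM V →ₗ[ℚ] CubM V :=
  (TensorProduct.mk ℚ V (SqM V)).compr₂ (cubRel V).mkQ

/-- The relations presenting `P⁴V` as a quotient of `V ⊗ P³V`. -/
def quarRel : Submodule ℚ (V ⊗[ℚ] CubM V) :=
  Submodule.span ℚ {z | ∃ (x y : V) (u : SqM V), z = x ⊗ₜ[ℚ] mulC V y u - y ⊗ₜ[ℚ] mulC V x u}

/-- The symmetric fourth power `P⁴V`. -/
abbrev QuarM : Type := (V ⊗[ℚ] CubM V) ⧸ quarRel V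

/-- The product `V × P³V → P⁴V`. -/
def mulQ : V →ₗ[ℚ] CubM V →ₗ[ℚ] QuarM V :=
  (TensorProduct.mk ℚ V (CubM V)).compr₂ (quarRel V).mkQ

/-- The relations presenting `P⁵V` as a quotient of `V ⊗ P⁴V`. -/
def quinRel : Submodule ℚ (V ⊗[ℚ] QuarM V) :=
  Submodule.span ℚ {z | ∃ (x y : V) (c : CubM V), z = x ⊗ₜ[ℚ] mulQ V y c - y ⊗ₜ[ℚ] mulQ V x c}

/-- The symmetric fifth power `P⁵V`. -/
abbrev QuinM : Type := (V ⊗[ℚ] QuarM V) ⧸ quinRel V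

/-- The product `V × P⁴V → P⁵V`. -/
def mulQn : V →ₗ[ℚ] QuarM V →ₗ[ℚ] QuinM V :=
  (TensorProduct.mk ℚ V (QuarM V)).compr₂ (quinRel V).mkQ

/-- The relations defining the exterior square `Λ²W` as a quotient of `W ⊗ W`. -/
def altRel2 : Submodule ℚ (W ⊗[ℚ] W) :=
  Submodule.span ℚ {z | ∃ x : W, z = x ⊗ₜ[ℚ] x}

/-- The exterior square `Λ²W`. -/
abbrev AltM : Type := (W ⊗[ℚ] W) ⧸ altRel2 W

/-- The wedge product `W × W → Λ²W`. -/
def wdg : W →ₗ[ℚ] W →ₗ[ℚ] AltM W :=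
  (TensorProduct.mk ℚ W W).compr₂ (altRel2 W).mkQ

/-- The element `⋆(x₁,…,x₅) = Σ_{i ∈ ℤ/5} xᵢ ⊗ (x_{i+1}x_{i+2} ∧ x_{i+3}x_{i+4})`
of `V ⊗ Λ²(P²V)`. -/
def star5 (x₁ x₂ x₃ x₄ x₅ : V) : V ⊗[ℚ] AltM (SqM V) :=
    x₁ ⊗ₜ[ℚ] wdg (SqM V) (sqm V x₂ x₃) (sqm V x₄ x₅)
  + x₂ ⊗ₜ[ℚ] wdg (SqM V) (sqm V x₃ x₄) (sqm V x₅ x₁)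
  + x₃ ⊗ₜ[ℚ] wdg (SqM V) (sqm V x₄ x₅) (sqm V x₁ x₂)
  + x₄ ⊗ₜ[ℚ] wdg (SqM V) (sqm V x₅ x₁) (sqm V x₂ x₃)
  + x₅ ⊗ₜ[ℚ] wdg (SqM V) (sqm V x₁ x₂) (sqm V x₃ x₄)

/-- A differential graded algebra (DGA) over `ℚ`: an `ℕ`-graded, graded-commutative,
associative unital `ℚ`-algebra with a degree `+1` differential satisfying `d ∘ d = 0`
and the graded Leibniz rule. -/
structure DGA where
  /-- The underlying type. -/
  carrier : Type
  [ringStr : Ring carrier]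
  [algStr : Algebra ℚ carrier]
  /-- The grading `A = ⊕ᵢ Aⁱ`. -/
  grading : ℕ → Submodule ℚ carrier
  one_mem : (1 : carrier) ∈ grading 0
  mul_mem : ∀ {i j : ℕ} {a b : carrier}, a ∈ grading i → b ∈ grading j → a * b ∈ grading (i + j)
  /-- The grading really is a direct sum decomposition. -/
  internal : DirectSum.IsInternal grading
  /-- Graded commutativity. -/
  gcomm : ∀ {i j : ℕ} {a b : carrier}, a ∈ grading i → b ∈ grading j →
    a * b = ((-1 : ℚ) ^ (i * j)) • (b * a)
  /-- The differential. -/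
  d : carrier →ₗ[ℚ] carrier
  d_mem : ∀ {i : ℕ} {a : carrier}, a ∈ grading i → d a ∈ grading (i + 1)
  d_d : ∀ a : carrier, d (d a) = 0
  /-- The graded Leibniz rule. -/
  leibniz : ∀ {i : ℕ} {a : carrier} (b : carrier), a ∈ grading i →
    d (a * b) = d a * b + ((-1 : ℚ) ^ i) • (a * d b)

attribute [instance] DGA.ringStr DGA.algStr

namespace DGA

variable (A : DGA)

/-- The closed elements of degree `i`. -/
def Z (i : ℕ) : Submodule ℚ A.carrier := A.grading i ⊓ LinearMap.ker A.d

/-- The exact elements of degree `i`, as a submodule of the closed ones. -/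
def Bdry (i : ℕ) : Submodule ℚ (A.Z i) :=
  Submodule.comap (A.Z i).subtype (Submodule.map A.d (A.grading (i - 1)))

/-- Degree `i` cohomology of the DGA. -/
abbrev H (i : ℕ) : Type := A.Z i ⧸ A.Bdry i

/-- The projection from closed elements to cohomology classes. -/
def pr (i : ℕ) : A.Z i →ₗ[ℚ] A.H i := (A.Bdry i).mkQ

end DGA

section Helpers

variable {U C : Type} [AddCommGroup U] [Module ℚ U] [AddCommGroup C] [Module ℚ C]

theorem sqm_comm' (x y : U) : sqm U x y = sqm U y x := by
  have : x ⊗ₜ[ℚ] y - y ⊗ₜ[ℚ] x ∈ sqRel U := Submodule.subset_span ⟨x, y, rfl⟩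
  exact (Submodule.Quotient.eq _).2 this

theorem exists_sqLift (B : U →ₗ[ℚ] U →ₗ[ℚ] C) (hB : ∀ x y, B x y = B y x) :
    ∃ F : SqM U →ₗ[ℚ] C, ∀ x y, F (sqm U x y) = B x y := by
  refine ⟨(sqRel U).liftQ (TensorProduct.lift B) ?_, fun x y => ?_⟩
  · refine Submodule.span_le.2 ?_
    rintro z ⟨x, y, rfl⟩
    simp [hB x y]
  · exact TensorProduct.lift.tmul x y

theorem exists_cubLift (B : U →ₗ[ℚ] SqM U →ₗ[ℚ] C)
    (hB : ∀ x y w, B x (sqm U y w) = B y (sqm U x w)) :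
    ∃ F : CubM U →ₗ[ℚ] C, ∀ x u, F (mulC U x u) = B x u := by
  refine ⟨(cubRel U).liftQ (TensorProduct.lift B) ?_, fun x y => ?_⟩
  · refine Submodule.span_le.2 ?_
    rintro z ⟨x, y, w, rfl⟩
    simp [hB x y]
  · exact TensorProduct.lift.tmul x y

theorem exists_altLift {E : Type} [AddCommGroup E] [Module ℚ E]
    (B : U →ₗ[ℚ] E →ₗ[ℚ] E →ₗ[ℚ] C) (hB : ∀ q e, B q e e = 0) :
    ∃ F : (U ⊗[ℚ] AltM E) →ₗ[ℚ] C, ∀ q e f, F (q ⊗ₜ[ℚ] wdg E e f) = B q e f := by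
  have h : ∀ q, altRel2 E ≤ LinearMap.ker (TensorProduct.lift (B q)) := by
    intro q
    refine Submodule.span_le.2 ?_
    rintro z ⟨x, rfl⟩
    simp [hB]
  refine ⟨TensorProduct.lift
    { toFun := fun q => (altRel2 E).liftQ (TensorProduct.lift (B q)) (h q)
      map_add' := ?_
      map_smul' := ?_ }, fun q e f => ?_⟩
  · intro x y
    apply Submodule.linearMap_qext
    apply TensorProduct.ext'
    intro e f
    simp
  · intro x y
    apply Submodule.linearMap_qext
    apply TensorProduct.ext'
    intro e f
    simp
  · simp [wdg]

theorem altExt {E : Type} [AddCommGroup E] [Module ℚ E]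
    {F G : (U ⊗[ℚ] AltM E) →ₗ[ℚ] C}
    (h : ∀ q e f, F (q ⊗ₜ[ℚ] wdg E e f) = G (q ⊗ₜ[ℚ] wdg E e f)) : F = G := by
  apply TensorProduct.ext
  ext q : 1
  apply Submodule.linearMap_qext
  apply TensorProduct.ext'
  intro e f
  exact h q e f

theorem sqExt {F G : SqM U →ₗ[ℚ] C}
    (h : ∀ x y, F (sqm U x y) = G (sqm U x y)) : F = G := by
  apply Submodule.linearMap_qext
  apply TensorProduct.ext'
  intro e f
  exact h e f

theorem sqMem {F : SqM U →ₗ[ℚ] C} (S : Submodule ℚ C)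
    (h : ∀ x y, F (sqm U x y) ∈ S) (u) : F u ∈ S := by
  have : S.mkQ ∘ₗ F = 0 := by
    apply sqExt
    intro x y
    simpa using h x y
  simpa using LinearMap.congr_fun this u

theorem altMem {E : Type} [AddCommGroup E] [Module ℚ E]
    {F : (U ⊗[ℚ] AltM E) →ₗ[ℚ] C} (S : Submodule ℚ C)
    (h : ∀ q e f, F (q ⊗ₜ[ℚ] wdg E e f) ∈ S) (t) : F t ∈ S := by
  have : S.mkQ ∘ₗ F = 0 := by
    apply altExt
    intro q e f
    simpa using h q e f
  simpa using LinearMap.congr_fun this t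

theorem comb_mem {E : Type} [AddCommGroup E] [Module ℚ E]
    (R : ℚ → (U ⊗[ℚ] AltM E) →ₗ[ℚ] C) (S : Submodule ℚ C) (F F' : (U ⊗[ℚ] AltM E) →ₗ[ℚ] C)
    (h : ∀ q e f, F' (q ⊗ₜ[ℚ] wdg E e f) - F (q ⊗ₜ[ℚ] wdg E e f)
      = (7 / 90 : ℚ) • R 0 (q ⊗ₜ[ℚ] wdg E e f) + (32 / 90 : ℚ) • R (1 / 4) (q ⊗ₜ[ℚ] wdg E e f)
        + (12 / 90 : ℚ) • R (1 / 2) (q ⊗ₜ[ℚ] wdg E e f)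
        + (32 / 90 : ℚ) • R (3 / 4) (q ⊗ₜ[ℚ] wdg E e f) + (7 / 90 : ℚ) • R 1 (q ⊗ₜ[ℚ] wdg E e f))
    (t) (hR : ∀ τ, R τ t ∈ S) : F t - F' t ∈ S := by
  have h1 : F' - F = (7 / 90 : ℚ) • R 0 + (32 / 90 : ℚ) • R (1 / 4) + (12 / 90 : ℚ) • R (1 / 2)
        + (32 / 90 : ℚ) • R (3 / 4) + (7 / 90 : ℚ) • R 1 := by
    apply altExt
    intro q e f
    exact h q e f
  have h2 : F t - F' t = -((F' - F) t) := by simp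
  rw [h2, h1]
  refine Submodule.neg_mem _ ?_
  have hsm := fun (c τ : ℚ) => Submodule.smul_mem _ c (hR τ)
  exact Submodule.add_mem _ (Submodule.add_mem _ (Submodule.add_mem _ (Submodule.add_mem _
    (hsm _ _) (hsm _ _)) (hsm _ _)) (hsm _ _)) (hsm _ _)

theorem exists_primitive (d : C →ₗ[ℚ] C) (G : Submodule ℚ C) (f : U →ₗ[ℚ] C)
    (hf : ∀ u, f u ∈ Submodule.map d G) :
    ∃ b : U →ₗ[ℚ] C, (∀ u, b u ∈ G) ∧ ∀ u, d (b u) = f u := by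
  obtain ⟨b, hb⟩ := Module.projective_lifting_property (d.domRestrict G).rangeRestrict
    (f.codRestrict (LinearMap.range (d.domRestrict G)) (by
      intro u
      obtain ⟨g, hg, h⟩ := hf u
      exact ⟨⟨g, hg⟩, h⟩)) (LinearMap.surjective_rangeRestrict _)
  refine ⟨G.subtype ∘ₗ b, fun u => (b u).2, fun u => ?_⟩
  have := congrArg Subtype.val (LinearMap.congr_fun hb u)
  simpa using this

end Helpers

namespace DGA

variable (A : DGA)

theorem comm_even {i j : ℕ} {a b : A.carrier} (ha : a ∈ A.grading i) (hb : b ∈ A.grading j)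
    (h : Even (i * j)) : a * b = b * a := by
  rw [A.gcomm ha hb, h.neg_one_pow, one_smul]

theorem comm_odd {i j : ℕ} {a b : A.carrier} (ha : a ∈ A.grading i) (hb : b ∈ A.grading j)
    (h : Odd (i * j)) : a * b = -(b * a) := by
  rw [A.gcomm ha hb, h.neg_one_pow, neg_one_smul]

theorem d_mul_even {i : ℕ} {a : A.carrier} (b : A.carrier) (ha : a ∈ A.grading i) (h : Even i) :
    A.d (a * b) = A.d a * b + a * A.d b := by
  rw [A.leibniz b ha, h.neg_one_pow, one_smul]

theorem d_mul_odd {i : ℕ} {a : A.carrier} (b : A.carrier) (ha : a ∈ A.grading i) (h : Odd i) :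
    A.d (a * b) = A.d a * b - a * A.d b := by
  rw [A.leibniz b ha, h.neg_one_pow, neg_one_smul, sub_eq_add_neg]

theorem odd_sq {i : ℕ} {a : A.carrier} (ha : a ∈ A.grading i) (h : Odd i) : a * a = 0 := by
  have h1 := A.comm_odd ha ha (h.mul h)
  have h2 : (2 : ℚ) • (a * a) = 0 := by
    rw [two_smul]
    nth_rewrite 1 [h1]
    simp
  simpa using h2

/-- The infinitesimal statement. -/
theorem infinitesimal {U : Type} [AddCommGroup U] [Module ℚ U]
    (E : Submodule ℚ (SqM U))
    (m : (U ⊗[ℚ] AltM (SqM U)) →ₗ[ℚ] (CubM U ⊗[ℚ] SqM U))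
    (hm : ∀ (q : U) (u v : SqM U),
      m (q ⊗ₜ[ℚ] wdg (SqM U) u v) = mulC U q u ⊗ₜ[ℚ] v - mulC U q v ⊗ₜ[ℚ] u)
    (ι : (U ⊗[ℚ] AltM E) →ₗ[ℚ] (U ⊗[ℚ] AltM (SqM U)))
    (hι : ∀ (q : U) (e e' : E),
      ι (q ⊗ₜ[ℚ] wdg E e e') = q ⊗ₜ[ℚ] wdg (SqM U) (e : SqM U) (e' : SqM U))
    (a : U →ₗ[ℚ] A.carrier) (ha : ∀ x, a x ∈ A.grading 2) (hda : ∀ x, A.d (a x) = 0)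
    (asq : SqM U →ₗ[ℚ] A.carrier) (hasq : ∀ x y, asq (sqm U x y) = a x * a y)
    (b : U →ₗ[ℚ] A.carrier) (hb : ∀ x, b x ∈ A.grading 1)
    (ba : SqM U →ₗ[ℚ] A.carrier) (hba : ∀ x y, ba (sqm U x y) = b x * a y + b y * a x)
    (g : E →ₗ[ℚ] A.carrier) (hg : ∀ e, g e ∈ A.grading 3)
    (hdg : ∀ e : E, A.d (g e) = asq (e : SqM U))
    (ε : E →ₗ[ℚ] A.carrier) (hε : ∀ e, ε e ∈ A.grading 2)
    (R : (U ⊗[ℚ] AltM E) →ₗ[ℚ] A.carrier)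
    (hR : ∀ q (e f : E), R (q ⊗ₜ[ℚ] wdg E e f) = A.d (b q) * (g e * g f)
      + a q * ((ba e + A.d (ε e)) * g f + g e * (ba f + A.d (ε f))))
    (t) (ht : m (ι t) = 0) : R t ∈ Submodule.map A.d (A.grading 7) := by
  have hasqm : ∀ u, asq u ∈ A.grading 4 := by
    apply sqMem
    intro x y
    rw [hasq]
    exact A.mul_mem (ha x) (ha y)
  have hbam : ∀ u, ba u ∈ A.grading 3 := by
    apply sqMem
    intro x y
    rw [hba]
    exact Submodule.add_mem _ (A.mul_mem (hb x) (ha y)) (A.mul_mem (hb y) (ha x))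
  obtain ⟨G, hG⟩ : ∃ F : (U ⊗[ℚ] AltM E) →ₗ[ℚ] A.carrier, ∀ q e f,
      F (q ⊗ₜ[ℚ] wdg E e f) = b q * (g e * g f) + a q * (ε e * g f - ε f * g e) := by
    let M : A.carrier →ₗ[ℚ] A.carrier →ₗ[ℚ] A.carrier := LinearMap.mul ℚ A.carrier
    let T : (U →ₗ[ℚ] A.carrier) → (E →ₗ[ℚ] A.carrier) → (E →ₗ[ℚ] A.carrier) →
        (U →ₗ[ℚ] E →ₗ[ℚ] E →ₗ[ℚ] A.carrier) := fun x y z =>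
      LinearMap.mk₂ ℚ (fun q e => (M (x q) ∘ₗ M (y e) ∘ₗ z))
        (by intros; ext; simp [M, add_mul]) (by intros; ext; simp [M])
        (by intros; ext; simp [M, add_mul, mul_add]) (by intros; ext; simp [M])
    have hT : ∀ x y z q e f, T x y z q e f = x q * (y e * z f) := by
      intros; simp [T, M]
    let T' : U →ₗ[ℚ] E →ₗ[ℚ] E →ₗ[ℚ] A.carrier :=
      LinearMap.mk₂ ℚ (fun q e => (T a (-ε) g q).flip e)
        (by intros; ext; simp) (by intros; ext; simp)
        (by intros; ext; simp) (by intros; ext; simp)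
    have hT' : ∀ q e f, T' q e f = -(a q * (ε f * g e)) := by
      intros; simp [T', hT]
    obtain ⟨F, hF⟩ := exists_altLift (T b g g + T a ε g + T') (by
      intro q e
      simp [hT, hT', A.odd_sq (hg e) (by decide)])
    refine ⟨F, fun q e f => ?_⟩
    rw [hF]
    simp only [LinearMap.add_apply, hT, hT', mul_sub]
    abel
  obtain ⟨N1, hN1⟩ : ∃ F : CubM U →ₗ[ℚ] A.carrier, ∀ q u,
      F (mulC U q u) = a q * ba u + b q * asq u := by
    let M : A.carrier →ₗ[ℚ] A.carrier →ₗ[ℚ] A.carrier := LinearMap.mul ℚ A.carrier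
    obtain ⟨F, hF⟩ := exists_cubLift (M.compl₁₂ a ba + M.compl₁₂ b asq) (by
      intro x y w
      simp only [LinearMap.add_apply, LinearMap.compl₁₂_apply, hba, hasq, M, LinearMap.mul_apply']
      have h1 := A.comm_even (ha x) (hb y) (by decide)
      have h2 := A.comm_even (ha y) (hb x) (by decide)
      have h3 := A.comm_even (ha x) (hb w) (by decide)
      have h4 := A.comm_even (ha y) (hb w) (by decide)
      have h5 := A.comm_even (ha x) (ha y) (by decide)
      simp only [mul_add, ← mul_assoc, h1, h2, h3, h4]
      simp only [mul_assoc, h5]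
      abel)
    exact ⟨F, fun q u => by simp [hF, M]⟩
  obtain ⟨N2, hN2⟩ : ∃ F : CubM U →ₗ[ℚ] A.carrier, ∀ q u,
      F (mulC U q u) = a q * asq u := by
    let M : A.carrier →ₗ[ℚ] A.carrier →ₗ[ℚ] A.carrier := LinearMap.mul ℚ A.carrier
    obtain ⟨F, hF⟩ := exists_cubLift (M.compl₁₂ a asq) (by
      intro x y w
      simp only [LinearMap.compl₁₂_apply, hasq, M, LinearMap.mul_apply']
      have h5 := A.comm_even (ha x) (ha y) (by decide)
      simp only [← mul_assoc, h5])
    exact ⟨F, fun q u => by simp [hF, M]⟩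
  obtain ⟨g', hg'⟩ := LinearMap.exists_extend g
  obtain ⟨ε', hε'⟩ := LinearMap.exists_extend ε
  replace hg' : ∀ e : E, g' e = g e := fun e => LinearMap.congr_fun hg' e
  replace hε' : ∀ e : E, ε' e = ε e := fun e => LinearMap.congr_fun hε' e
  obtain ⟨L, hL⟩ : ∃ L : (CubM U ⊗[ℚ] SqM U) →ₗ[ℚ] A.carrier, ∀ c u,
      L (c ⊗ₜ[ℚ] u) = N1 c * g' u + N2 c * ε' u :=
    ⟨TensorProduct.lift ((LinearMap.mul ℚ A.carrier).compl₁₂ N1 g'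
      + (LinearMap.mul ℚ A.carrier).compl₁₂ N2 ε'), fun c u => by simp⟩
  have key : R = A.d ∘ₗ G + L ∘ₗ m ∘ₗ ι := by
    apply altExt
    intro q e f
    simp only [LinearMap.add_apply, LinearMap.comp_apply, hR, hι, hm, hG, map_add, map_sub, hL,
      hN1, hN2, hg', hε', mul_sub]
    rw [A.d_mul_odd _ (hb q) (by decide), A.d_mul_even _ (ha q) (by decide),
      A.d_mul_even _ (ha q) (by decide), A.d_mul_odd _ (hg e) (by decide),
      A.d_mul_even _ (hε e) (by decide), A.d_mul_even _ (hε f) (by decide), hda, hdg, hdg]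
    have h1 : g e * ba f = - (ba f * g e) := A.comm_odd (hg e) (hbam f) (by decide)
    have h2 : g e * asq f = asq f * g e := A.comm_even (hg e) (hasqm f) (by decide)
    have h3 : ε e * asq f = asq f * ε e := A.comm_even (hε e) (hasqm f) (by decide)
    have h4 : ε f * asq e = asq e * ε f := A.comm_even (hε f) (hasqm e) (by decide)
    have h5 : g e * A.d (ε f) = - (A.d (ε f) * g e) :=
      A.comm_odd (hg e) (A.d_mem (hε f)) (by decide)
    simp only [mul_add, add_mul, mul_sub, zero_mul, h1, h2, h3, h4, h5, mul_assoc, mul_neg]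
    abel
  have hRt : R t = A.d (G t) := by
    simp [key, ht]
  rw [hRt]
  refine Submodule.mem_map_of_mem (altMem _ ?_ t)
  intro q e f
  rw [hG]
  exact Submodule.add_mem _ (A.mul_mem (hb q) (A.mul_mem (hg e) (hg f)))
    (A.mul_mem (ha q) (Submodule.sub_mem _ (A.mul_mem (hε e) (hg f)) (A.mul_mem (hε f) (hg e))))

/-- Boole's rule for the cubic expression `(a + t b) (g + t k + t² θ) (g' + t k' + t² θ')`. -/
theorem boole {C : Type} [Ring C] [Algebra ℚ C] (a b g k h g' k' h' : C) (R : ℚ → C)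
    (hR : ∀ t : ℚ, R t = b * ((g + t • k + t ^ 2 • h) * (g' + t • k' + t ^ 2 • h'))
      + (a + t • b) * ((k + (2 * t) • h) * (g' + t • k' + t ^ 2 • h')
        + (g + t • k + t ^ 2 • h) * (k' + (2 * t) • h'))) :
    (a + b) * ((g + k + h) * (g' + k' + h')) - a * (g * g')
      = (7 / 90 : ℚ) • R 0 + (32 / 90 : ℚ) • R (1 / 4) + (12 / 90 : ℚ) • R (1 / 2)
        + (32 / 90 : ℚ) • R (3 / 4) + (7 / 90 : ℚ) • R 1 := by
  simp only [hR, mul_add, add_mul, smul_mul_assoc, mul_smul_comm, smul_add, smul_smul]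
  module

end DGA

set_option maxHeartbeats 4000000

/-- **Theorem 2.5.** Let `A` be a DGA over `ℚ` with `H³ = 0`. Then the map
`𝒫 : D → H⁸` induced by the restriction of `αγ²` to `D` is independent of the cochain
choice `(α, γ)`: for any two cochain choices the values of the two maps `αγ²` on any
element of `D` differ by an exact element, hence define the same class in `H⁸`. -/
theorem P_well_defined (A : DGA) (h3 : ∀ x : A.H 3, x = 0)
    (cup : SqM (A.H 2) →ₗ[ℚ] A.H 4)
    (hcup : ∀ (x y : A.Z 2) (w : A.Z 4),
      (w : A.carrier) = (x : A.carrier) * (y : A.carrier) →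
      cup (sqm (A.H 2) (A.pr 2 x) (A.pr 2 y)) = A.pr 4 w)
    (m : (A.H 2 ⊗[ℚ] AltM (SqM (A.H 2))) →ₗ[ℚ] (CubM (A.H 2) ⊗[ℚ] SqM (A.H 2)))
    (hm : ∀ (q : A.H 2) (u v : SqM (A.H 2)),
      m (q ⊗ₜ[ℚ] wdg (SqM (A.H 2)) u v)
        = mulC (A.H 2) q u ⊗ₜ[ℚ] v - mulC (A.H 2) q v ⊗ₜ[ℚ] u)
    (ι : (A.H 2 ⊗[ℚ] AltM ↥(LinearMap.ker cup)) →ₗ[ℚ] (A.H 2 ⊗[ℚ] AltM (SqM (A.H 2))))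
    (hι : ∀ (q : A.H 2) (e e' : ↥(LinearMap.ker cup)),
      ι (q ⊗ₜ[ℚ] wdg ↥(LinearMap.ker cup) e e')
        = q ⊗ₜ[ℚ] wdg (SqM (A.H 2)) (e : SqM (A.H 2)) (e' : SqM (A.H 2)))
    -- first cochain choice `(α, γ)` and the associated map `Φ = αγ²`
    (α : A.H 2 →ₗ[ℚ] A.Z 2) (hα : ∀ h, A.pr 2 (α h) = h)
    (αsq : SqM (A.H 2) →ₗ[ℚ] A.Z 4)
    (hαsq : ∀ (x y : A.H 2) (w : A.Z 4),
      (w : A.carrier) = (α x : A.carrier) * (α y : A.carrier) →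
      αsq (sqm (A.H 2) x y) = w)
    (γ : ↥(LinearMap.ker cup) →ₗ[ℚ] A.carrier)
    (hγmem : ∀ e, γ e ∈ A.grading 3)
    (hγd : ∀ e : ↥(LinearMap.ker cup), A.d (γ e) = (αsq (e : SqM (A.H 2)) : A.carrier))
    (Φ : (A.H 2 ⊗[ℚ] AltM ↥(LinearMap.ker cup)) →ₗ[ℚ] A.carrier)
    (hΦ : ∀ (q : A.H 2) (e e' : ↥(LinearMap.ker cup)),
      Φ (q ⊗ₜ[ℚ] wdg ↥(LinearMap.ker cup) e e') = (α q : A.carrier) * (γ e * γ e'))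
    -- second cochain choice `(α', γ')` and the associated map `Φ' = α'γ'²`
    (α' : A.H 2 →ₗ[ℚ] A.Z 2) (hα' : ∀ h, A.pr 2 (α' h) = h)
    (αsq' : SqM (A.H 2) →ₗ[ℚ] A.Z 4)
    (hαsq' : ∀ (x y : A.H 2) (w : A.Z 4),
      (w : A.carrier) = (α' x : A.carrier) * (α' y : A.carrier) →
      αsq' (sqm (A.H 2) x y) = w)
    (γ' : ↥(LinearMap.ker cup) →ₗ[ℚ] A.carrier)
    (hγmem' : ∀ e, γ' e ∈ A.grading 3)
    (hγd' : ∀ e : ↥(LinearMap.ker cup), A.d (γ' e) = (αsq' (e : SqM (A.H 2)) : A.carrier))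
    (Φ' : (A.H 2 ⊗[ℚ] AltM ↥(LinearMap.ker cup)) →ₗ[ℚ] A.carrier)
    (hΦ' : ∀ (q : A.H 2) (e e' : ↥(LinearMap.ker cup)),
      Φ' (q ⊗ₜ[ℚ] wdg ↥(LinearMap.ker cup) e e') = (α' q : A.carrier) * (γ' e * γ' e')) :
    ∀ t : A.H 2 ⊗[ℚ] AltM ↥(LinearMap.ker cup), m (ι t) = 0 →
      Φ t - Φ' t ∈ Submodule.map A.d (A.grading 7) := by
  intro t ht
  have hZ2 : ∀ z : A.Z 2, (z : A.carrier) ∈ A.grading 2 := fun z => z.2.1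
  have hZ2d : ∀ z : A.Z 2, A.d (z : A.carrier) = 0 := fun z => z.2.2
  have prod4 : ∀ x y : A.Z 2, (x : A.carrier) * y ∈ A.Z 4 := fun x y =>
    ⟨A.mul_mem (hZ2 x) (hZ2 y), by
      show A.d _ = 0
      rw [A.d_mul_even _ (hZ2 x) (by decide), hZ2d, hZ2d]; simp⟩
  have hs : ∀ x y, (αsq (sqm _ x y) : A.carrier) = α x * α y := fun x y => by
    rw [hαsq x y ⟨_, prod4 (α x) (α y)⟩ rfl]
  have hs' : ∀ x y, (αsq' (sqm _ x y) : A.carrier) = α' x * α' y := fun x y => by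
    rw [hαsq' x y ⟨_, prod4 (α' x) (α' y)⟩ rfl]
  let a : A.H 2 →ₗ[ℚ] A.carrier := (A.Z 2).subtype ∘ₗ α
  let a' : A.H 2 →ₗ[ℚ] A.carrier := (A.Z 2).subtype ∘ₗ α'
  have ha : ∀ x, a x ∈ A.grading 2 := fun x => hZ2 _
  have hda : ∀ x, A.d (a x) = 0 := fun x => hZ2d _
  obtain ⟨b, hb, hdb⟩ := exists_primitive A.d (A.grading 1) (a' - a) (by
    intro u
    have : A.pr 2 (α' u) = A.pr 2 (α u) := by rw [hα, hα']
    have h2 : α' u - α u ∈ A.Bdry 2 := (Submodule.Quotient.eq _).1 this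
    exact h2)
  let M : A.carrier →ₗ[ℚ] A.carrier →ₗ[ℚ] A.carrier := LinearMap.mul ℚ A.carrier
  let db : A.H 2 →ₗ[ℚ] A.carrier := A.d ∘ₗ b
  have hdbm : ∀ x, db x ∈ A.grading 2 := fun x => A.d_mem (hb x)
  have hddb : ∀ x, A.d (db x) = 0 := fun x => A.d_d _
  have ha' : ∀ x, a' x = a x + db x := fun x => by simp [db, hdb]
  obtain ⟨η, hη⟩ := exists_sqLift (M.compl₁₂ b a + (M.compl₁₂ b a).flip) (by
    intro x y
    simp [add_comm])
  obtain ⟨θ, hθ⟩ := exists_sqLift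
    ((1 / 2 : ℚ) • (M.compl₁₂ b db + (M.compl₁₂ b db).flip)) (by
    intro x y
    simp [add_comm])
  replace hη : ∀ x y, η (sqm _ x y) = b x * a y + b y * a x := by
    intro x y; rw [hη]; simp [M]
  replace hθ : ∀ x y, θ (sqm _ x y) = (1 / 2 : ℚ) • (b x * db y + b y * db x) := by
    intro x y; rw [hθ]; simp [M]
  have hηm : ∀ u, η u ∈ A.grading 3 := by
    apply sqMem
    intro x y
    rw [hη]
    exact Submodule.add_mem _ (A.mul_mem (hb x) (ha y)) (A.mul_mem (hb y) (ha x))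
  have hθm : ∀ u, θ u ∈ A.grading 3 := by
    apply sqMem
    intro x y
    rw [hθ]
    exact Submodule.smul_mem _ _
      (Submodule.add_mem _ (A.mul_mem (hb x) (hdbm y)) (A.mul_mem (hb y) (hdbm x)))
  let s : SqM (A.H 2) →ₗ[ℚ] A.carrier := (A.Z 4).subtype ∘ₗ αsq
  let s' : SqM (A.H 2) →ₗ[ℚ] A.carrier := (A.Z 4).subtype ∘ₗ αsq'
  have hdη : ∀ x y, A.d (η (sqm _ x y)) = a x * db y + db x * a y := by
    intro x y
    rw [hη, map_add, A.d_mul_odd _ (hb x) (by decide), A.d_mul_odd _ (hb y) (by decide), hda, hda,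
      A.comm_even (ha x) (hdbm y) (by decide)]
    simp only [db, LinearMap.comp_apply, mul_zero, sub_zero]
    abel
  have hdθ : ∀ x y, A.d (θ (sqm _ x y)) = db x * db y := by
    intro x y
    rw [hθ, map_smul, map_add, A.d_mul_odd _ (hb x) (by decide), A.d_mul_odd _ (hb y) (by decide),
      hddb, hddb]
    have : A.d (b y) * db x = A.d (b x) * db y :=
      A.comm_even (hdbm y) (hdbm x) (by decide)
    rw [this]
    simp only [db, LinearMap.comp_apply, mul_zero, sub_zero]
    module
  have hss : s' = s + A.d ∘ₗ η + A.d ∘ₗ θ := by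
    apply sqExt
    intro x y
    have e1 : s' (sqm _ x y) = a' x * a' y := hs' x y
    have e2 : s (sqm _ x y) = a x * a y := hs x y
    simp only [LinearMap.add_apply, LinearMap.comp_apply, hdη, hdθ, e1, e2, ha', mul_add, add_mul]
    abel
  let E := LinearMap.ker cup
  obtain ⟨ε, hε, hdε⟩ := exists_primitive A.d (A.grading 2)
    (γ' - γ - η ∘ₗ E.subtype - θ ∘ₗ E.subtype) (by
    intro e
    have hz : (γ' - γ - η ∘ₗ E.subtype - θ ∘ₗ E.subtype) e ∈ A.Z 3 := by
      refine ⟨?_, ?_⟩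
      · exact Submodule.sub_mem _ (Submodule.sub_mem _ (Submodule.sub_mem _ (hγmem' e) (hγmem e))
          (hηm _)) (hθm _)
      · show A.d _ = 0
        have := LinearMap.congr_fun hss e
        have e1 : A.d (γ' e) = s' e := hγd' e
        have e2 : A.d (γ e) = s e := hγd e
        simp only [LinearMap.sub_apply, map_sub, e1, e2, this, LinearMap.add_apply,
          LinearMap.comp_apply, Submodule.subtype_apply]
        abel
    have h2 : (⟨_, hz⟩ : A.Z 3) ∈ A.Bdry 3 := (Submodule.Quotient.mk_eq_zero _).1 (h3 _)
    exact h2)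
  -- the path of cochain choices
  let κ : E →ₗ[ℚ] A.carrier := η ∘ₗ E.subtype + A.d ∘ₗ ε
  let ϑ : E →ₗ[ℚ] A.carrier := θ ∘ₗ E.subtype
  let aτ : ℚ → A.H 2 →ₗ[ℚ] A.carrier := fun τ => a + τ • db
  let gτ : ℚ → E →ₗ[ℚ] A.carrier := fun τ => γ + τ • κ + τ ^ 2 • ϑ
  let kτ : ℚ → E →ₗ[ℚ] A.carrier := fun τ => κ + (2 * τ) • ϑ
  have hγ' : ∀ e, γ' e = γ e + κ e + ϑ e := by
    intro e
    simp only [κ, ϑ, LinearMap.add_apply, LinearMap.comp_apply, hdε, LinearMap.sub_apply]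
    abel
  have hgm : ∀ τ e, gτ τ e ∈ A.grading 3 := fun τ e =>
    Submodule.add_mem _ (Submodule.add_mem _ (hγmem e) (Submodule.smul_mem _ _
      (Submodule.add_mem _ (hηm _) (A.d_mem (hε e))))) (Submodule.smul_mem _ _ (hθm _))
  have hkm : ∀ τ e, kτ τ e ∈ A.grading 3 := fun τ e =>
    Submodule.add_mem _ (Submodule.add_mem _ (hηm _) (A.d_mem (hε e)))
      (Submodule.smul_mem _ _ (hθm _))
  have hRex : ∀ τ : ℚ, ∃ R : (A.H 2 ⊗[ℚ] AltM E) →ₗ[ℚ] A.carrier, ∀ q e f,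
      R (q ⊗ₜ[ℚ] wdg E e f) = db q * (gτ τ e * gτ τ f)
        + aτ τ q * (kτ τ e * gτ τ f + gτ τ e * kτ τ f) := by
    intro τ
    let T : (A.H 2 →ₗ[ℚ] A.carrier) → (E →ₗ[ℚ] A.carrier) → (E →ₗ[ℚ] A.carrier) →
        (A.H 2 →ₗ[ℚ] E →ₗ[ℚ] E →ₗ[ℚ] A.carrier) := fun x y z =>
      LinearMap.mk₂ ℚ (fun q e => (M (x q) ∘ₗ M (y e) ∘ₗ z))
        (by intros; ext; simp [M, add_mul]) (by intros; ext; simp [M])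
        (by intros; ext; simp [M, add_mul, mul_add]) (by intros; ext; simp [M])
    have hT : ∀ x y z q e f, T x y z q e f = x q * (y e * z f) := by
      intros; simp [T, M]
    obtain ⟨F, hF⟩ := exists_altLift (T db (gτ τ) (gτ τ) +
        (T (aτ τ) (kτ τ) (gτ τ) + T (aτ τ) (gτ τ) (kτ τ))) (by
      intro q e
      simp only [LinearMap.add_apply, hT, A.odd_sq (hgm τ e) (by decide), ← mul_add,
        A.comm_odd (hkm τ e) (hgm τ e) (by decide)]
      simp)
    refine ⟨F, fun q e f => ?_⟩
    rw [hF]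
    simp only [LinearMap.add_apply, hT, mul_add]
  choose R hR using hRex
  have hRmem : ∀ τ, R τ t ∈ Submodule.map A.d (A.grading 7) := by
    intro τ
    refine A.infinitesimal E m hm ι hι (aτ τ) ?_ ?_ (s + τ • (A.d ∘ₗ η) + τ ^ 2 • (A.d ∘ₗ θ)) ?_
      b hb (η + (2 * τ) • θ) ?_ (gτ τ) (hgm τ) ?_ ε hε (R τ) ?_ t ht
    · exact fun x => Submodule.add_mem _ (ha x) (Submodule.smul_mem _ _ (hdbm x))
    · intro x
      simp only [aτ, LinearMap.add_apply, LinearMap.smul_apply, map_add, map_smul, hda, hddb]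
      simp
    · intro x y
      have e2 : s (sqm _ x y) = a x * a y := hs x y
      simp only [aτ, LinearMap.add_apply, LinearMap.smul_apply, LinearMap.comp_apply, hdη, hdθ, e2,
        mul_add, add_mul, smul_mul_assoc, mul_smul_comm]
      module
    · intro x y
      simp only [aτ, LinearMap.add_apply, LinearMap.smul_apply, hη, hθ,
        mul_add, add_mul, smul_mul_assoc, mul_smul_comm]
      module
    · intro e
      have e2 : A.d (γ e) = s e := hγd e
      simp only [gτ, κ, ϑ, LinearMap.add_apply, LinearMap.smul_apply, LinearMap.comp_apply, map_add,
        map_smul, e2, A.d_d, add_zero, Submodule.subtype_apply]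
    · intro q e f
      have hk : ∀ e : E, (η + (2 * τ) • θ) (e : SqM (A.H 2)) + A.d (ε e) = kτ τ e := by
        intro e
        simp only [kτ, κ, ϑ, LinearMap.add_apply, LinearMap.smul_apply, LinearMap.comp_apply,
          Submodule.subtype_apply]
        abel
      rw [hR, hk, hk]
      rfl
  refine comb_mem (fun c => R c) (Submodule.map A.d (A.grading 7)) Φ Φ' ?_ t hRmem
  intro q e f
  have e1 : Φ' (q ⊗ₜ[ℚ] wdg E e f) = (a q + db q) * ((γ e + κ e + ϑ e) * (γ f + κ f + ϑ f)) := by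
    rw [← ha' q, ← hγ' e, ← hγ' f]
    exact hΦ' q e f
  have e2 : Φ (q ⊗ₜ[ℚ] wdg E e f) = a q * (γ e * γ f) := hΦ q e f
  refine (congrArg₂ (· - ·) e1 e2).trans ?_
  exact DGA.boole (a q) (db q) (γ e) (κ e) (ϑ e) (γ f) (κ f) (ϑ f)
    (fun τ => R τ (q ⊗ₜ[ℚ] wdg E e f)) (fun τ => hR τ q e f)

end
end

section
/- Let f : A → B be a morphism of DGAs over ℚ (a degree-preserving unital algebra homomorphism commuting with the differentials) such that the induced map H²(f) : H²(A) → H²(B) is an isomorphism. Then the map H²(f) ⊗ Λ²(P²H²(f)) restricts to a map D_A → D_B, and for every cochain choice (α_A, γ_A) on A there exists a cochain choice (α_B, γ_B) on B such that H⁸(f) ∘ 𝒫_A = 𝒫_B ∘ (D_A → D_B), where 𝒫_A : D_A → H⁸(A) and 𝒫_B : D_B → H⁸(B) are the maps induced by the restrictions of α_Aγ_A² and α_Bγ_B² respectively. -/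
/-!
Common constructions: for a `ℚ`-vector space `V`, the symmetric powers
`P²V, P³V, P⁴V, P⁵V` (as `SqM V`, `CubM V`, `QuarM V`, `QuinM V`), built as iterated
quotients of tensor products, with the multiplication maps between them; the exterior
square `Λ²W` (as `AltM W`) with the wedge map; and the 5-linear map `⋆` (as `star5`).
-/

open TensorProduct

noncomputable section

variable (V W : Type) [AddCommGroup V] [Module ℚ V] [AddCommGroup W] [Module ℚ W]

theorem sqm_comm'_s8 {V : Type} [AddCommGroup V] [Module ℚ V] (x y : V) :
    sqm V x y = sqm V y x :=
  (Submodule.Quotient.eq (sqRel V)).2 (Submodule.subset_span ⟨x, y, rfl⟩)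

theorem mulC_comm' {V : Type} [AddCommGroup V] [Module ℚ V] (x y w : V) :
    mulC V x (sqm V y w) = mulC V y (sqm V x w) :=
  (Submodule.Quotient.eq (cubRel V)).2 (Submodule.subset_span ⟨x, y, w, rfl⟩)

theorem wdg_self' {W : Type} [AddCommGroup W] [Module ℚ W] (x : W) :
    wdg W x x = 0 :=
  (Submodule.Quotient.mk_eq_zero (altRel2 W)).2 (Submodule.subset_span ⟨x, rfl⟩)

theorem sq_ext {V N : Type} [AddCommGroup V] [Module ℚ V] [AddCommGroup N] [Module ℚ N]
    {g h : SqM V →ₗ[ℚ] N} (H : ∀ x y, g (sqm V x y) = h (sqm V x y)) : g = h := by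
  apply Submodule.linearMap_qext
  apply TensorProduct.ext'
  exact H

theorem alt_ext {Q W N : Type} [AddCommGroup Q] [Module ℚ Q] [AddCommGroup W] [Module ℚ W]
    [AddCommGroup N] [Module ℚ N]
    {g h : (Q ⊗[ℚ] AltM W) →ₗ[ℚ] N}
    (H : ∀ q x y, g (q ⊗ₜ[ℚ] wdg W x y) = h (q ⊗ₜ[ℚ] wdg W x y)) : g = h := by
  apply TensorProduct.ext
  apply LinearMap.ext
  intro q
  apply Submodule.linearMap_qext
  apply TensorProduct.ext'
  exact H q

theorem sq_lift {V N : Type} [AddCommGroup V] [Module ℚ V] [AddCommGroup N] [Module ℚ N]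
    (b : V →ₗ[ℚ] V →ₗ[ℚ] N) (hb : ∀ x y, b x y = b y x) :
    ∃ g : SqM V →ₗ[ℚ] N, ∀ x y, g (sqm V x y) = b x y := by
  refine ⟨(sqRel V).liftQ (TensorProduct.lift b) ?_, fun x y => ?_⟩
  · refine Submodule.span_le.2 ?_
    rintro _ ⟨x, y, rfl⟩
    simp [hb x y]
  · exact (Submodule.liftQ_apply (sqRel V) (TensorProduct.lift b) (x ⊗ₜ[ℚ] y)).trans
      (TensorProduct.lift.tmul x y)

theorem cub_lift {V N : Type} [AddCommGroup V] [Module ℚ V] [AddCommGroup N] [Module ℚ N]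
    (b : V →ₗ[ℚ] SqM V →ₗ[ℚ] N) (hb : ∀ x y w, b x (sqm V y w) = b y (sqm V x w)) :
    ∃ g : CubM V →ₗ[ℚ] N, ∀ x u, g (mulC V x u) = b x u := by
  refine ⟨(cubRel V).liftQ (TensorProduct.lift b) ?_, fun x y => ?_⟩
  · refine Submodule.span_le.2 ?_
    rintro _ ⟨x, y, w, rfl⟩
    simp [hb x y w]
  · exact (Submodule.liftQ_apply (cubRel V) (TensorProduct.lift b) (x ⊗ₜ[ℚ] y)).trans
      (TensorProduct.lift.tmul x y)

theorem alt_lift {W N : Type} [AddCommGroup W] [Module ℚ W] [AddCommGroup N] [Module ℚ N]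
    (b : W →ₗ[ℚ] W →ₗ[ℚ] N) (hb : ∀ x, b x x = 0) :
    ∃ g : AltM W →ₗ[ℚ] N, ∀ x y, g (wdg W x y) = b x y := by
  refine ⟨(altRel2 W).liftQ (TensorProduct.lift b) ?_, fun x y => ?_⟩
  · refine Submodule.span_le.2 ?_
    rintro _ ⟨x, rfl⟩
    simp [hb x]
  · exact (Submodule.liftQ_apply (altRel2 W) (TensorProduct.lift b) (x ⊗ₜ[ℚ] y)).trans
      (TensorProduct.lift.tmul x y)

theorem sq_map {V W : Type} [AddCommGroup V] [Module ℚ V] [AddCommGroup W] [Module ℚ W]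
    (f : V →ₗ[ℚ] W) :
    ∃ g : SqM V →ₗ[ℚ] SqM W, ∀ x y, g (sqm V x y) = sqm W (f x) (f y) := by
  obtain ⟨g, hg⟩ := sq_lift ((sqm W).compl₁₂ f f) (fun x y => by
    simpa using sqm_comm'_s8 (f x) (f y))
  exact ⟨g, fun x y => by simpa using hg x y⟩

theorem cub_map {V W : Type} [AddCommGroup V] [Module ℚ V] [AddCommGroup W] [Module ℚ W]
    (f : V →ₗ[ℚ] W) (g : SqM V →ₗ[ℚ] SqM W)
    (hg : ∀ x y, g (sqm V x y) = sqm W (f x) (f y)) :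
    ∃ k : CubM V →ₗ[ℚ] CubM W, ∀ x u, k (mulC V x u) = mulC W (f x) (g u) := by
  obtain ⟨k, hk⟩ := cub_lift ((mulC W).compl₁₂ f g) (fun x y w => by
    simpa [hg] using mulC_comm' (f x) (f y) (f w))
  exact ⟨k, fun x y => by simpa using hk x y⟩

theorem alt_map {V W : Type} [AddCommGroup V] [Module ℚ V] [AddCommGroup W] [Module ℚ W]
    (f : V →ₗ[ℚ] W) :
    ∃ g : AltM V →ₗ[ℚ] AltM W, ∀ x y, g (wdg V x y) = wdg W (f x) (f y) := by
  obtain ⟨g, hg⟩ := alt_lift ((wdg W).compl₁₂ f f) (fun x => by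
    simpa using wdg_self' (f x))
  exact ⟨g, fun x y => by simpa using hg x y⟩

/-- Maps out of `Q ⊗ Λ²(P²V)` are determined by decomposable elements. -/
theorem alt_sq_ext {Q V N : Type} [AddCommGroup Q] [Module ℚ Q] [AddCommGroup V] [Module ℚ V]
    [AddCommGroup N] [Module ℚ N]
    {g h : (Q ⊗[ℚ] AltM (SqM V)) →ₗ[ℚ] N}
    (H : ∀ q x y z w, g (q ⊗ₜ[ℚ] wdg (SqM V) (sqm V x y) (sqm V z w))
      = h (q ⊗ₜ[ℚ] wdg (SqM V) (sqm V x y) (sqm V z w))) : g = h := by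
  apply alt_ext
  intro q u v
  have h1 : ∀ x y, (g ∘ₗ TensorProduct.mk ℚ Q (AltM (SqM V)) q) ∘ₗ wdg (SqM V) (sqm V x y)
      = (h ∘ₗ TensorProduct.mk ℚ Q (AltM (SqM V)) q) ∘ₗ wdg (SqM V) (sqm V x y) :=
    fun x y => sq_ext fun z w => H q x y z w
  have h2 : (g ∘ₗ TensorProduct.mk ℚ Q (AltM (SqM V)) q) ∘ₗ (wdg (SqM V)).flip v
      = (h ∘ₗ TensorProduct.mk ℚ Q (AltM (SqM V)) q) ∘ₗ (wdg (SqM V)).flip v :=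
    sq_ext fun x y => LinearMap.congr_fun (h1 x y) v
  exact LinearMap.congr_fun h2 u

theorem exists_lin_inv {V W : Type} [AddCommGroup V] [Module ℚ V] [AddCommGroup W] [Module ℚ W]
    (f : V →ₗ[ℚ] W) (hf : Function.Bijective f) :
    ∃ g : W →ₗ[ℚ] V, (∀ x, g (f x) = x) ∧ ∀ x, f (g x) = x :=
  ⟨(LinearEquiv.ofBijective f hf).symm.toLinearMap,
    fun x => (LinearEquiv.ofBijective f hf).symm_apply_apply x,
    fun x => (LinearEquiv.ofBijective f hf).apply_symm_apply x⟩

theorem DGA.mul_Z (A : DGA) (x y : A.Z 2) : (x : A.carrier) * (y : A.carrier) ∈ A.Z 4 := by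
  obtain ⟨x, hx, hx'⟩ := x
  obtain ⟨y, hy, hy'⟩ := y
  refine ⟨A.mul_mem hx hy, ?_⟩
  change A.d x = 0 at hx'
  change A.d y = 0 at hy'
  change A.d (x * y) = 0
  rw [A.leibniz y hx, hx', hy']
  simp

theorem DGA.Z2_comm (A : DGA) (x y : A.Z 2) :
    (x : A.carrier) * (y : A.carrier) = (y : A.carrier) * (x : A.carrier) := by
  have := A.gcomm x.2.1 y.2.1
  rw [this]
  norm_num

theorem DGA.sq_zero (A : DGA) (x : A.carrier) (hx : x ∈ A.grading 3) : x * x = 0 := by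
  have h := A.gcomm hx hx
  have h2 : (2 : ℚ) • (x * x) = 0 := by
    rw [two_smul]
    nth_rewrite 1 [h]
    norm_num
  exact (smul_eq_zero.1 h2).resolve_left (by norm_num)

theorem DGA.exists_alphaSq (A : DGA) {V : Type} [AddCommGroup V] [Module ℚ V]
    (α : V →ₗ[ℚ] A.Z 2) : ∃ g : SqM V →ₗ[ℚ] A.Z 4,
      ∀ x y, (g (sqm V x y) : A.carrier) = (α x : A.carrier) * (α y : A.carrier) := by
  obtain ⟨g, hg⟩ := sq_lift (LinearMap.mk₂ ℚ
    (fun x y => (⟨(α x : A.carrier) * (α y : A.carrier), A.mul_Z _ _⟩ : A.Z 4))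
    (fun x y z => Subtype.ext (by simp [add_mul]))
    (fun c x y => Subtype.ext (by simp))
    (fun x y z => Subtype.ext (by simp [mul_add]))
    (fun c x y => Subtype.ext (by simp)))
    (fun x y => Subtype.ext (by simpa using A.Z2_comm _ _))
  exact ⟨g, fun x y => by rw [hg]; rfl⟩

theorem DGA.pr_eq_zero (A : DGA) (i : ℕ) (z : A.Z i) :
    A.pr i z = 0 ↔ (z : A.carrier) ∈ Submodule.map A.d (A.grading (i - 1)) := by
  exact Submodule.Quotient.mk_eq_zero (A.Bdry i)

/-- The cup product is computed by `α²`. -/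
theorem DGA.cup_eq (A : DGA) {V H : Type} [AddCommGroup V] [Module ℚ V]
    [AddCommGroup H] [Module ℚ H] (pr2 : A.Z 2 →ₗ[ℚ] V) (pr4 : A.Z 4 →ₗ[ℚ] H)
    (cup : SqM V →ₗ[ℚ] H)
    (hcup : ∀ (x y : A.Z 2) (w : A.Z 4),
      (w : A.carrier) = (x : A.carrier) * (y : A.carrier) →
      cup (sqm V (pr2 x) (pr2 y)) = pr4 w)
    (α : V →ₗ[ℚ] A.Z 2) (hα : ∀ h, pr2 (α h) = h)
    (αsq : SqM V →ₗ[ℚ] A.Z 4)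
    (hαsq : ∀ x y, (αsq (sqm V x y) : A.carrier) = (α x : A.carrier) * (α y : A.carrier))
    (u : SqM V) : cup u = pr4 (αsq u) := by
  have : cup = pr4 ∘ₗ αsq := sq_ext fun x y => by
    have := hcup (α x) (α y) _ (hαsq x y)
    rwa [hα, hα] at this
  exact LinearMap.congr_fun this u

set_option maxHeartbeats 4000000 in
/-- The statement with the cohomology groups replaced by abstract vector spaces. -/
theorem P_natural_gen (A B : DGA) {VA VB HA HB : Type}
    [AddCommGroup VA] [Module ℚ VA] [AddCommGroup VB] [Module ℚ VB]
    [AddCommGroup HA] [Module ℚ HA] [AddCommGroup HB] [Module ℚ HB]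
    (pA : A.Z 2 →ₗ[ℚ] VA) (pB : B.Z 2 →ₗ[ℚ] VB) (rA : A.Z 4 →ₗ[ℚ] HA) (rB : B.Z 4 →ₗ[ℚ] HB)
    (hrA : ∀ z, rA z = 0 ↔ (z : A.carrier) ∈ Submodule.map A.d (A.grading 3))
    (hrB : ∀ z, rB z = 0 ↔ (z : B.carrier) ∈ Submodule.map B.d (B.grading 3))
    (f : A.carrier →ₐ[ℚ] B.carrier)
    (hfd : ∀ a : A.carrier, f (A.d a) = B.d (f a))
    (hfgr : ∀ (i : ℕ) (a : A.carrier), a ∈ A.grading i → f a ∈ B.grading i)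
    (f2 : VA →ₗ[ℚ] VB)
    (hf2 : ∀ (x : A.Z 2) (y : B.Z 2),
      (y : B.carrier) = f (x : A.carrier) → f2 (pA x) = pB y)
    (hf2bij : Function.Bijective f2)
    (cupA : SqM VA →ₗ[ℚ] HA)
    (hcupA : ∀ (x y : A.Z 2) (w : A.Z 4),
      (w : A.carrier) = (x : A.carrier) * (y : A.carrier) →
      cupA (sqm VA (pA x) (pA y)) = rA w)
    (cupB : SqM VB →ₗ[ℚ] HB)
    (hcupB : ∀ (x y : B.Z 2) (w : B.Z 4),
      (w : B.carrier) = (x : B.carrier) * (y : B.carrier) →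
      cupB (sqm VB (pB x) (pB y)) = rB w)
    (mA : (VA ⊗[ℚ] AltM (SqM VA)) →ₗ[ℚ] (CubM VA ⊗[ℚ] SqM VA))
    (hmA : ∀ (q : VA) (u v : SqM VA),
      mA (q ⊗ₜ[ℚ] wdg (SqM VA) u v)
        = mulC VA q u ⊗ₜ[ℚ] v - mulC VA q v ⊗ₜ[ℚ] u)
    (mB : (VB ⊗[ℚ] AltM (SqM VB)) →ₗ[ℚ] (CubM VB ⊗[ℚ] SqM VB))
    (hmB : ∀ (q : VB) (u v : SqM VB),
      mB (q ⊗ₜ[ℚ] wdg (SqM VB) u v)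
        = mulC VB q u ⊗ₜ[ℚ] v - mulC VB q v ⊗ₜ[ℚ] u)
    (ιA : (VA ⊗[ℚ] AltM ↥(LinearMap.ker cupA)) →ₗ[ℚ] (VA ⊗[ℚ] AltM (SqM VA)))
    (hιA : ∀ (q : VA) (e e' : ↥(LinearMap.ker cupA)),
      ιA (q ⊗ₜ[ℚ] wdg ↥(LinearMap.ker cupA) e e')
        = q ⊗ₜ[ℚ] wdg (SqM VA) (e : SqM VA) (e' : SqM VA))
    (ιB : (VB ⊗[ℚ] AltM ↥(LinearMap.ker cupB)) →ₗ[ℚ] (VB ⊗[ℚ] AltM (SqM VB)))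
    (hιB : ∀ (q : VB) (e e' : ↥(LinearMap.ker cupB)),
      ιB (q ⊗ₜ[ℚ] wdg ↥(LinearMap.ker cupB) e e')
        = q ⊗ₜ[ℚ] wdg (SqM VB) (e : SqM VB) (e' : SqM VB))
    (F : (VA ⊗[ℚ] AltM (SqM VA)) →ₗ[ℚ] (VB ⊗[ℚ] AltM (SqM VB)))
    (hF : ∀ q x y z w : VA,
      F (q ⊗ₜ[ℚ] wdg (SqM VA) (sqm VA x y) (sqm VA z w))
        = f2 q ⊗ₜ[ℚ] wdg (SqM VB) (sqm VB (f2 x) (f2 y))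
            (sqm VB (f2 z) (f2 w)))
    (αA : VA →ₗ[ℚ] A.Z 2) (hαA : ∀ h, pA (αA h) = h)
    (αsqA : SqM VA →ₗ[ℚ] A.Z 4)
    (hαsqA : ∀ (x y : VA) (w : A.Z 4),
      (w : A.carrier) = (αA x : A.carrier) * (αA y : A.carrier) →
      αsqA (sqm VA x y) = w)
    (γA : ↥(LinearMap.ker cupA) →ₗ[ℚ] A.carrier)
    (hγAmem : ∀ e, γA e ∈ A.grading 3)
    (hγAd : ∀ e : ↥(LinearMap.ker cupA), A.d (γA e) = (αsqA (e : SqM VA) : A.carrier))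
    (ΦA : (VA ⊗[ℚ] AltM ↥(LinearMap.ker cupA)) →ₗ[ℚ] A.carrier)
    (hΦA : ∀ (q : VA) (e e' : ↥(LinearMap.ker cupA)),
      ΦA (q ⊗ₜ[ℚ] wdg ↥(LinearMap.ker cupA) e e') = (αA q : A.carrier) * (γA e * γA e')) :
    (∀ tA : VA ⊗[ℚ] AltM ↥(LinearMap.ker cupA), mA (ιA tA) = 0 →
      mB (F (ιA tA)) = 0 ∧ F (ιA tA) ∈ LinearMap.range ιB) ∧
    ∃ (αB : VB →ₗ[ℚ] B.Z 2), (∀ h, pB (αB h) = h) ∧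
    ∃ αsqB : SqM VB →ₗ[ℚ] B.Z 4,
      (∀ (x y : VB) (w : B.Z 4),
        (w : B.carrier) = (αB x : B.carrier) * (αB y : B.carrier) →
        αsqB (sqm VB x y) = w) ∧
    ∃ γB : ↥(LinearMap.ker cupB) →ₗ[ℚ] B.carrier,
      (∀ e, γB e ∈ B.grading 3) ∧
      (∀ e : ↥(LinearMap.ker cupB), B.d (γB e) = (αsqB (e : SqM VB) : B.carrier)) ∧
    ∃ ΦB : (VB ⊗[ℚ] AltM ↥(LinearMap.ker cupB)) →ₗ[ℚ] B.carrier,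
      (∀ (q : VB) (e e' : ↥(LinearMap.ker cupB)),
        ΦB (q ⊗ₜ[ℚ] wdg ↥(LinearMap.ker cupB) e e')
          = (αB q : B.carrier) * (γB e * γB e')) ∧
      ∀ (tA : VA ⊗[ℚ] AltM ↥(LinearMap.ker cupA))
        (tB : VB ⊗[ℚ] AltM ↥(LinearMap.ker cupB)),
        mA (ιA tA) = 0 → ιB tB = F (ιA tA) →
        f (ΦA tA) - ΦB tB ∈ Submodule.map B.d (B.grading 7) := by
  -- the inverse of `H²(f)` and the induced maps on symmetric powers
  obtain ⟨g2, hg2, hf2g⟩ := exists_lin_inv f2 hf2bij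
  obtain ⟨S, hS⟩ := sq_map f2
  obtain ⟨S', hS'⟩ := sq_map g2
  obtain ⟨K, hK⟩ := cub_map f2 S hS
  have hS'S : ∀ u, S' (S u) = u := fun u =>
    LinearMap.congr_fun (sq_ext (g := S' ∘ₗ S) (h := LinearMap.id)
      fun x y => by simp [hS, hS', hg2]) u
  have hF' : ∀ q u v, F (q ⊗ₜ[ℚ] wdg (SqM VA) u v)
      = f2 q ⊗ₜ[ℚ] wdg (SqM VB) (S u) (S v) := by
    obtain ⟨T, hT⟩ := alt_map S
    have : F = TensorProduct.map f2 T := alt_sq_ext fun q x y z w => by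
      rw [hF, TensorProduct.map_tmul, hT, hS, hS]
    intro q u v
    rw [this, TensorProduct.map_tmul, hT]
  have hmF : ∀ t, mB (F t) = TensorProduct.map K S (mA t) := fun t =>
    LinearMap.congr_fun (alt_ext (g := mB ∘ₗ F) (h := TensorProduct.map K S ∘ₗ mA)
      fun q u v => by
        simp only [LinearMap.comp_apply]
        rw [hF', hmB, hmA, map_sub, TensorProduct.map_tmul, TensorProduct.map_tmul, hK, hK]) t
  -- `α_B`
  have hfZ : ∀ z ∈ A.Z 2, f.toLinearMap z ∈ B.Z 2 := fun z hz => by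
    refine ⟨hfgr _ _ hz.1, ?_⟩
    have h2 : A.d z = 0 := hz.2
    change B.d (f z) = 0
    rw [← hfd, h2, map_zero]
  obtain ⟨αB, hαB0⟩ : ∃ αB : VB →ₗ[ℚ] B.Z 2,
      ∀ x, (αB x : B.carrier) = f (αA (g2 x) : A.carrier) :=
    ⟨f.toLinearMap.restrict hfZ ∘ₗ αA ∘ₗ g2, fun x => rfl⟩
  have hαBv : ∀ x, (αB (f2 x) : B.carrier) = f (αA x : A.carrier) := fun x => by
    rw [hαB0, hg2]
  have hαB : ∀ h, pB (αB h) = h := fun h => by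
    rw [← hf2 (αA (g2 h)) (αB h) (hαB0 h), hαA, hf2g]
  obtain ⟨αsqB, hαsqB⟩ := B.exists_alphaSq αB
  have hαsqA' : ∀ x y, (αsqA (sqm VA x y) : A.carrier)
      = (αA x : A.carrier) * (αA y : A.carrier) := fun x y => by
    rw [hαsqA x y ⟨_, A.mul_Z (αA x) (αA y)⟩ rfl]
  have hfsq : ∀ u, f (αsqA u : A.carrier) = (αsqB (S u) : B.carrier) := fun u =>
    LinearMap.congr_fun (sq_ext (g := f.toLinearMap ∘ₗ (A.Z 4).subtype ∘ₗ αsqA)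
      (h := (B.Z 4).subtype ∘ₗ αsqB ∘ₗ S) fun x y => by
        simp [hαsqA', hS, hαsqB, hαBv]) u
  have hcA := A.cup_eq pA rA cupA hcupA αA hαA αsqA hαsqA'
  have hcB := B.cup_eq pB rB cupB hcupB αB hαB αsqB hαsqB
  -- `E_A → E_B`
  have hSE : ∀ u ∈ LinearMap.ker cupA, S u ∈ LinearMap.ker cupB := fun u hu => by
    rw [LinearMap.mem_ker, hcA, hrA] at hu
    rw [LinearMap.mem_ker, hcB, hrB]
    obtain ⟨b, hb, hbd⟩ := hu
    refine ⟨f b, hfgr _ _ hb, ?_⟩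
    rw [← hfd, hbd, hfsq]
  obtain ⟨j, hj⟩ : ∃ j : LinearMap.ker cupA →ₗ[ℚ] LinearMap.ker cupB,
      ∀ e, (j e : SqM VB) = S e := ⟨S.restrict hSE, fun e => rfl⟩
  have hjinj : LinearMap.ker j = ⊥ := by
    rw [LinearMap.ker_eq_bot]
    intro a b hab
    apply Subtype.ext
    rw [← hS'S a, ← hS'S b, ← hj, ← hj, hab]
  obtain ⟨r, hr⟩ := LinearMap.exists_leftInverse_of_injective j hjinj
  have hr' : ∀ e, r (j e) = e := fun e => LinearMap.congr_fun hr e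
  -- `γ_B`
  obtain ⟨γ0, hγ0mem, hγ0d⟩ : ∃ γ0 : LinearMap.ker cupB →ₗ[ℚ] B.carrier,
      (∀ e, γ0 e ∈ B.grading 3) ∧ ∀ e, B.d (γ0 e) = (αsqB (e : SqM VB) : B.carrier) := by
    obtain ⟨s, hs⟩ := LinearMap.exists_rightInverse_of_surjective
      (B.d.submoduleMap (B.grading 3))
      (LinearMap.range_eq_top.2 (B.d.submoduleMap_surjective (B.grading 3)))
    have hmem : ∀ e : LinearMap.ker cupB,
        ((B.Z 4).subtype ∘ₗ αsqB ∘ₗ (LinearMap.ker cupB).subtype) e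
          ∈ Submodule.map B.d (B.grading 3) := fun e => by
      have := e.2
      rwa [LinearMap.mem_ker, hcB, hrB] at this
    refine ⟨(B.grading 3).subtype ∘ₗ s ∘ₗ LinearMap.codRestrict _ _ hmem,
      fun e => (s _).2, fun e => ?_⟩
    exact congrArg Subtype.val (LinearMap.congr_fun hs (LinearMap.codRestrict _ _ hmem e))
  obtain ⟨γB, hγBv⟩ : ∃ γB : LinearMap.ker cupB →ₗ[ℚ] B.carrier,
      ∀ e, γB e = f (γA (r e)) + γ0 (e - j (r e)) :=
    ⟨f.toLinearMap ∘ₗ γA ∘ₗ r + γ0 ∘ₗ (LinearMap.id - j ∘ₗ r), fun e => rfl⟩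
  have hγBmem : ∀ e, γB e ∈ B.grading 3 := fun e => by
    rw [hγBv]
    exact add_mem (hfgr _ _ (hγAmem _)) (hγ0mem _)
  have hγBd : ∀ e : LinearMap.ker cupB, B.d (γB e) = (αsqB (e : SqM VB) : B.carrier) :=
    fun e => by
      rw [hγBv, map_add, ← hfd, hγAd, hfsq, hγ0d, ← hj]
      simp
  have hγBj : ∀ e, γB (j e) = f (γA e) := fun e => by
    rw [hγBv, hr', sub_self, map_zero, add_zero]
  -- `Φ_B`
  obtain ⟨G, hG⟩ := alt_lift ((LinearMap.mul ℚ B.carrier).compl₁₂ γB γB)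
    (fun e => by simpa using B.sq_zero _ (hγBmem e))
  obtain ⟨ΦB, hΦB⟩ : ∃ ΦB : (VB ⊗[ℚ] AltM ↥(LinearMap.ker cupB)) →ₗ[ℚ] B.carrier,
      ∀ q e e', ΦB (q ⊗ₜ[ℚ] wdg ↥(LinearMap.ker cupB) e e')
        = (αB q : B.carrier) * (γB e * γB e') :=
    ⟨TensorProduct.lift ((LinearMap.mul ℚ B.carrier).compl₁₂ ((B.Z 2).subtype ∘ₗ αB) G),
      fun q e e' => by simp [hG]⟩
  -- `D_A → D_B`
  obtain ⟨Λ, hΛ⟩ := alt_map j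
  have hJ : ∀ t, ιB (TensorProduct.map f2 Λ t) = F (ιA t) := fun t =>
    LinearMap.congr_fun (alt_ext (g := ιB ∘ₗ TensorProduct.map f2 Λ) (h := F ∘ₗ ιA)
      fun q e e' => by
        simp only [LinearMap.comp_apply]
        rw [TensorProduct.map_tmul, hΛ, hιB, hιA, hF', hj, hj]) t
  have hΦ : ∀ t, ΦB (TensorProduct.map f2 Λ t) = f (ΦA t) := fun t =>
    LinearMap.congr_fun (alt_ext (g := ΦB ∘ₗ TensorProduct.map f2 Λ) (h := f.toLinearMap ∘ₗ ΦA)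
      fun q e e' => by
        simp only [LinearMap.comp_apply]
        rw [TensorProduct.map_tmul, hΛ, hΦB, hΦA, hαBv, hγBj, hγBj]
        simp) t
  -- `ιB` is injective
  have hιinj : Function.Injective ιB := by
    obtain ⟨p, hp⟩ := LinearMap.exists_leftInverse_of_injective (LinearMap.ker cupB).subtype
      (Submodule.ker_subtype _)
    obtain ⟨P, hP⟩ := alt_map p
    have hp' : ∀ e : LinearMap.ker cupB, p (e : SqM VB) = e :=
      fun e => LinearMap.congr_fun hp e
    have h : ∀ t, TensorProduct.map LinearMap.id P (ιB t) = t := fun t =>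
      LinearMap.congr_fun (alt_ext (g := TensorProduct.map LinearMap.id P ∘ₗ ιB)
        (h := LinearMap.id) fun q e e' => by
          simp only [LinearMap.comp_apply]
          rw [hιB, TensorProduct.map_tmul, hP, hp', hp']
          rfl) t
    exact Function.LeftInverse.injective h
  refine ⟨fun tA htA => ⟨by rw [hmF, htA, map_zero], ⟨_, hJ tA⟩⟩, αB, hαB, αsqB,
    fun x y w hw => Subtype.ext ((hαsqB x y).trans hw.symm), γB, hγBmem, hγBd, ΦB, hΦB,
    fun tA tB _ htB => ?_⟩
  have : tB = TensorProduct.map f2 Λ tA := hιinj (htB.trans (hJ tA).symm)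
  rw [this, hΦ, sub_self]
  exact zero_mem _

/-- **Proposition 2.8 (naturality of `𝒫`).** Let `f : A → B` be a morphism of DGAs over
`ℚ` inducing an isomorphism `H²(f)`. Then `H²(f) ⊗ Λ²(P²H²(f))` restricts to a map
`D_A → D_B`, and for every cochain choice `(α_A, γ_A)` on `A` there is a cochain choice
`(α_B, γ_B)` on `B` such that `H⁸(f) ∘ 𝒫_A = 𝒫_B ∘ (D_A → D_B)`, i.e. for every
`t ∈ D_A` the element `f(α_Aγ_A²(t))` and the value of `α_Bγ_B²` on the image of `t`
differ by an exact element of `B`. -/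
theorem P_natural (A B : DGA) (f : A.carrier →ₐ[ℚ] B.carrier)
    (hfd : ∀ a : A.carrier, f (A.d a) = B.d (f a))
    (hfgr : ∀ (i : ℕ) (a : A.carrier), a ∈ A.grading i → f a ∈ B.grading i)
    (f2 : A.H 2 →ₗ[ℚ] B.H 2)
    (hf2 : ∀ (x : A.Z 2) (y : B.Z 2),
      (y : B.carrier) = f (x : A.carrier) → f2 (A.pr 2 x) = B.pr 2 y)
    (hf2bij : Function.Bijective f2)
    (cupA : SqM (A.H 2) →ₗ[ℚ] A.H 4)
    (hcupA : ∀ (x y : A.Z 2) (w : A.Z 4),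
      (w : A.carrier) = (x : A.carrier) * (y : A.carrier) →
      cupA (sqm (A.H 2) (A.pr 2 x) (A.pr 2 y)) = A.pr 4 w)
    (cupB : SqM (B.H 2) →ₗ[ℚ] B.H 4)
    (hcupB : ∀ (x y : B.Z 2) (w : B.Z 4),
      (w : B.carrier) = (x : B.carrier) * (y : B.carrier) →
      cupB (sqm (B.H 2) (B.pr 2 x) (B.pr 2 y)) = B.pr 4 w)
    (mA : (A.H 2 ⊗[ℚ] AltM (SqM (A.H 2))) →ₗ[ℚ] (CubM (A.H 2) ⊗[ℚ] SqM (A.H 2)))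
    (hmA : ∀ (q : A.H 2) (u v : SqM (A.H 2)),
      mA (q ⊗ₜ[ℚ] wdg (SqM (A.H 2)) u v)
        = mulC (A.H 2) q u ⊗ₜ[ℚ] v - mulC (A.H 2) q v ⊗ₜ[ℚ] u)
    (mB : (B.H 2 ⊗[ℚ] AltM (SqM (B.H 2))) →ₗ[ℚ] (CubM (B.H 2) ⊗[ℚ] SqM (B.H 2)))
    (hmB : ∀ (q : B.H 2) (u v : SqM (B.H 2)),
      mB (q ⊗ₜ[ℚ] wdg (SqM (B.H 2)) u v)
        = mulC (B.H 2) q u ⊗ₜ[ℚ] v - mulC (B.H 2) q v ⊗ₜ[ℚ] u)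
    (ιA : (A.H 2 ⊗[ℚ] AltM ↥(LinearMap.ker cupA)) →ₗ[ℚ] (A.H 2 ⊗[ℚ] AltM (SqM (A.H 2))))
    (hιA : ∀ (q : A.H 2) (e e' : ↥(LinearMap.ker cupA)),
      ιA (q ⊗ₜ[ℚ] wdg ↥(LinearMap.ker cupA) e e')
        = q ⊗ₜ[ℚ] wdg (SqM (A.H 2)) (e : SqM (A.H 2)) (e' : SqM (A.H 2)))
    (ιB : (B.H 2 ⊗[ℚ] AltM ↥(LinearMap.ker cupB)) →ₗ[ℚ] (B.H 2 ⊗[ℚ] AltM (SqM (B.H 2))))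
    (hιB : ∀ (q : B.H 2) (e e' : ↥(LinearMap.ker cupB)),
      ιB (q ⊗ₜ[ℚ] wdg ↥(LinearMap.ker cupB) e e')
        = q ⊗ₜ[ℚ] wdg (SqM (B.H 2)) (e : SqM (B.H 2)) (e' : SqM (B.H 2)))
    (F : (A.H 2 ⊗[ℚ] AltM (SqM (A.H 2))) →ₗ[ℚ] (B.H 2 ⊗[ℚ] AltM (SqM (B.H 2))))
    (hF : ∀ q x y z w : A.H 2,
      F (q ⊗ₜ[ℚ] wdg (SqM (A.H 2)) (sqm (A.H 2) x y) (sqm (A.H 2) z w))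
        = f2 q ⊗ₜ[ℚ] wdg (SqM (B.H 2)) (sqm (B.H 2) (f2 x) (f2 y))
            (sqm (B.H 2) (f2 z) (f2 w)))
    (αA : A.H 2 →ₗ[ℚ] A.Z 2) (hαA : ∀ h, A.pr 2 (αA h) = h)
    (αsqA : SqM (A.H 2) →ₗ[ℚ] A.Z 4)
    (hαsqA : ∀ (x y : A.H 2) (w : A.Z 4),
      (w : A.carrier) = (αA x : A.carrier) * (αA y : A.carrier) →
      αsqA (sqm (A.H 2) x y) = w)
    (γA : ↥(LinearMap.ker cupA) →ₗ[ℚ] A.carrier)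
    (hγAmem : ∀ e, γA e ∈ A.grading 3)
    (hγAd : ∀ e : ↥(LinearMap.ker cupA), A.d (γA e) = (αsqA (e : SqM (A.H 2)) : A.carrier))
    (ΦA : (A.H 2 ⊗[ℚ] AltM ↥(LinearMap.ker cupA)) →ₗ[ℚ] A.carrier)
    (hΦA : ∀ (q : A.H 2) (e e' : ↥(LinearMap.ker cupA)),
      ΦA (q ⊗ₜ[ℚ] wdg ↥(LinearMap.ker cupA) e e') = (αA q : A.carrier) * (γA e * γA e')) :
    (∀ tA : A.H 2 ⊗[ℚ] AltM ↥(LinearMap.ker cupA), mA (ιA tA) = 0 →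
      mB (F (ιA tA)) = 0 ∧ F (ιA tA) ∈ LinearMap.range ιB) ∧
    ∃ (αB : B.H 2 →ₗ[ℚ] B.Z 2), (∀ h, B.pr 2 (αB h) = h) ∧
    ∃ αsqB : SqM (B.H 2) →ₗ[ℚ] B.Z 4,
      (∀ (x y : B.H 2) (w : B.Z 4),
        (w : B.carrier) = (αB x : B.carrier) * (αB y : B.carrier) →
        αsqB (sqm (B.H 2) x y) = w) ∧
    ∃ γB : ↥(LinearMap.ker cupB) →ₗ[ℚ] B.carrier,
      (∀ e, γB e ∈ B.grading 3) ∧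
      (∀ e : ↥(LinearMap.ker cupB), B.d (γB e) = (αsqB (e : SqM (B.H 2)) : B.carrier)) ∧
    ∃ ΦB : (B.H 2 ⊗[ℚ] AltM ↥(LinearMap.ker cupB)) →ₗ[ℚ] B.carrier,
      (∀ (q : B.H 2) (e e' : ↥(LinearMap.ker cupB)),
        ΦB (q ⊗ₜ[ℚ] wdg ↥(LinearMap.ker cupB) e e')
          = (αB q : B.carrier) * (γB e * γB e')) ∧
      ∀ (tA : A.H 2 ⊗[ℚ] AltM ↥(LinearMap.ker cupA))
        (tB : B.H 2 ⊗[ℚ] AltM ↥(LinearMap.ker cupB)),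
        mA (ιA tA) = 0 → ιB tB = F (ιA tA) →
        f (ΦA tA) - ΦB tB ∈ Submodule.map B.d (B.grading 7) := by
  exact P_natural_gen A B (A.pr 2) (B.pr 2) (A.pr 4) (B.pr 4) (A.pr_eq_zero 4) (B.pr_eq_zero 4)
    f hfd hfgr f2 hf2 hf2bij cupA hcupA cupB hcupB mA hmA mB hmB ιA hιA ιB hιB F hF
    αA hαA αsqA hαsqA γA hγAmem hγAd ΦA hΦA

end
end
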